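/- arXiv:1505.02292 — 3 statements merged into one kernel-verified Lean document; each statement's English description precedes it below -/
import Mathlib

section
/- Let (Ω, ℱ, F) be a probability space, α ∈ (0,1), and L an integrable real-valued random variable on Ω. Then CVaR_α(L) = sup { E_G[L] : G a probability measure on (Ω, ℱ) with G ≪ F and dG/dF ≤ 1/(1-α) F-almost surely }. -/
/-!
Write `q = VaR F L α`. The generalized inverse property `VaR F L ξ ≤ x ↔ ξ ≤ F(L ≤ x)`
(`VaR_le_iff`) shows that `VaR F L` pushes Lebesgue measure on `(0,1)` forward to the law of `L`
(`map_VaR`). As `VaR F L` is monotone and equals `q` at `α`, integrating `x ↦ (x - q)⁺` against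
both laws gives `CVaR F L α = q + (1 - α)⁻¹ * ∫ (L - q)⁺ dF` (`CVaR_eq`).

The density bound on `G` amounts to `G ≤ (1 - α)⁻¹ • F`, hence
`E_G[L] ≤ q + E_G[(L - q)⁺] ≤ q + (1 - α)⁻¹ * E_F[(L - q)⁺]`. Equality holds for the measure with
density `(1 - α)⁻¹` on `{L > q}`, a constant `κ` on `{L = q}` and `0` on `{L < q}`, where `κ` is
chosen to make the total mass one; `κ ∈ [0, (1 - α)⁻¹]` because
`F(L > q) ≤ 1 - α ≤ F(L ≥ q)`.
-/

open MeasureTheory Set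

/-- Value-at-Risk at level `ξ`: the infimum of `x` such that `F(L ≤ x) ≥ ξ`. -/
noncomputable def VaR {Ω : Type*} [MeasurableSpace Ω] (F : Measure Ω) (L : Ω → ℝ) (ξ : ℝ) : ℝ :=
  sInf {x : ℝ | ξ ≤ (F {ω | L ω ≤ x}).toReal}

/-- Conditional Value-at-Risk at level `α`: `(1/(1-α)) ∫_α^1 VaR_ξ(L) dξ`. -/
noncomputable def CVaR {Ω : Type*} [MeasurableSpace Ω] (F : Measure Ω) (L : Ω → ℝ) (α : ℝ) : ℝ :=
  (1 - α)⁻¹ * ∫ ξ in α..1, VaR F L ξ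

open Filter Topology ProbabilityTheory

section Quantile

variable {Ω : Type*} [MeasurableSpace Ω] {F : Measure Ω} [IsProbabilityMeasure F] {L : Ω → ℝ}

lemma cdf_map_eq (hLm : Measurable L) (x : ℝ) :
    cdf (F.map L) x = (F {ω | L ω ≤ x}).toReal := by
  have := Measure.isProbabilityMeasure_map (μ := F) hLm.aemeasurable
  rw [cdf_eq_real, Measure.real, Measure.map_apply hLm measurableSet_Iic]
  rfl

/-- The Galois connection between the quantile function and the distribution function; right
continuity of the latter makes the infimum defining `VaR` attained. -/
lemma VaR_le_iff (hLm : Measurable L) {ξ : ℝ} (hξ : ξ ∈ Ioo (0 : ℝ) 1) (x : ℝ) :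
    VaR F L ξ ≤ x ↔ ξ ≤ (F {ω | L ω ≤ x}).toReal := by
  have := Measure.isProbabilityMeasure_map (μ := F) hLm.aemeasurable
  simp only [VaR, ← cdf_map_eq hLm]
  set c := cdf (F.map L) with hc
  have hne : {x : ℝ | ξ ≤ c x}.Nonempty :=
    (((tendsto_cdf_atTop (F.map L)).eventually (lt_mem_nhds hξ.2)).exists).imp
      fun _ h => le_of_lt h
  have hbdd : BddBelow {x : ℝ | ξ ≤ c x} := by
    obtain ⟨y, hy⟩ := ((tendsto_cdf_atBot (F.map L)).eventually (gt_mem_nhds hξ.1)).exists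
    refine ⟨y, fun z hz => ?_⟩
    by_contra! h
    exact absurd (c.mono h.le) (not_le.2 (lt_of_lt_of_le hy hz))
  refine ⟨fun h => ?_, fun h => csInf_le hbdd h⟩
  refine le_trans ?_ (c.mono h)
  have ht : Tendsto c (𝓝[>] (sInf {x : ℝ | ξ ≤ c x})) (𝓝 (c (sInf {x : ℝ | ξ ≤ c x}))) :=
    ((c.right_continuous _).mono Ioi_subset_Ici_self)
  refine ge_of_tendsto ht ?_
  filter_upwards [self_mem_nhdsWithin] with y hy
  obtain ⟨s, hs, hsy⟩ := exists_lt_of_csInf_lt hne hy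
  exact le_trans hs (c.mono hsy.le)

lemma VaR_monotoneOn (hLm : Measurable L) : MonotoneOn (VaR F L) (Ioo (0 : ℝ) 1) := by
  intro a ha b hb hab
  rw [VaR_le_iff hLm ha]
  exact hab.trans ((VaR_le_iff hLm hb _).1 le_rfl)

lemma aemeasurable_VaR (hLm : Measurable L) :
    AEMeasurable (VaR F L) (volume.restrict (Ioo (0 : ℝ) 1)) :=
  aemeasurable_restrict_of_monotoneOn measurableSet_Ioo (VaR_monotoneOn hLm)

/-- Inverse transform sampling: the quantile function of a uniform variable has the law of `L`. -/
lemma map_VaR (hLm : Measurable L) :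
    (volume.restrict (Ioo (0 : ℝ) 1)).map (VaR F L) = F.map L := by
  have := Measure.isProbabilityMeasure_map (μ := F) hLm.aemeasurable
  refine (Measure.ext_of_Iic _ _ fun x => ?_).symm
  rw [Measure.map_apply_of_aemeasurable (aemeasurable_VaR hLm) measurableSet_Iic,
    Measure.map_apply hLm measurableSet_Iic]
  have hp : F (L ⁻¹' Iic x) = ENNReal.ofReal (F {ω | L ω ≤ x}).toReal :=
    (ENNReal.ofReal_toReal (measure_ne_top F _)).symm
  have h1 : (F {ω | L ω ≤ x}).toReal ≤ 1 := measureReal_le_one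
  rw [Measure.restrict_apply' measurableSet_Ioo, hp]
  have : VaR F L ⁻¹' Iic x ∩ Ioo 0 1 = Iic (F {ω | L ω ≤ x}).toReal ∩ Ioo 0 1 := by
    ext ξ
    simp only [mem_inter_iff, mem_preimage, mem_Iic]
    exact and_congr_left fun h => VaR_le_iff hLm h x
  rw [this, ← Measure.restrict_apply' measurableSet_Ioo, restrict_Ioo_eq_restrict_Ioc,
    Measure.restrict_apply' measurableSet_Ioc, inter_comm, Ioc_inter_Iic, min_eq_right h1,
    Real.volume_Ioc, sub_zero]

/-- The Rockafellar–Uryasev formula, with the minimizer `VaR F L α` plugged in. -/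
lemma CVaR_eq (hLm : Measurable L) (hL : Integrable L F) {α : ℝ} (hα : α ∈ Ioo (0 : ℝ) 1) :
    CVaR F L α = VaR F L α + (1 - α)⁻¹ * ∫ ω, max (L ω - VaR F L α) 0 ∂F := by
  set q := VaR F L α with hq
  have hVm := aemeasurable_VaR (F := F) hLm
  have hVi : IntegrableOn (VaR F L) (Ioo (0 : ℝ) 1) := by
    have h : Integrable (id : ℝ → ℝ) (F.map L) :=
      (integrable_map_measure aestronglyMeasurable_id hLm.aemeasurable).2 hL
    rw [← map_VaR hLm] at h
    exact (integrable_map_measure aestronglyMeasurable_id hVm).1 h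
  have hg : Measurable fun x : ℝ => max (x - q) 0 := by fun_prop
  have e1 : ∫ ω, max (L ω - q) 0 ∂F = ∫ ξ in Ioo (0 : ℝ) 1, max (VaR F L ξ - q) 0 := by
    rw [← integral_map (f := fun x : ℝ => max (x - q) 0) hLm.aemeasurable
      hg.aestronglyMeasurable, ← map_VaR hLm,
      integral_map (f := fun x : ℝ => max (x - q) 0) hVm hg.aestronglyMeasurable]
  have hsub : Ioo α 1 ⊆ Ioo (0 : ℝ) 1 := Ioo_subset_Ioo_left hα.1.le
  have e2 : ∫ ξ in Ioo (0 : ℝ) 1, max (VaR F L ξ - q) 0 = ∫ ξ in Ioo α 1, (VaR F L ξ - q) := by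
    rw [setIntegral_eq_of_subset_of_forall_sdiff_eq_zero measurableSet_Ioo hsub]
    · refine setIntegral_congr_fun measurableSet_Ioo fun ξ hξ => ?_
      exact max_eq_left (sub_nonneg.2 (VaR_monotoneOn hLm hα (hsub hξ) hξ.1.le))
    · intro ξ hξ
      have : ξ ≤ α := by
        by_contra! h
        exact hξ.2 ⟨h, hξ.1.2⟩
      exact max_eq_right (sub_nonpos.2 (VaR_monotoneOn hLm hξ.1 hα this))
  have e3 : ∫ ξ in Ioo α 1, (VaR F L ξ - q) = (∫ ξ in Ioo α 1, VaR F L ξ) - (1 - α) * q := by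
    rw [integral_sub (hVi.mono_set hsub) (integrable_const q)]
    simp [Measure.real, hα.2.le]
  have h1 : (1 - α) ≠ 0 := by linarith [hα.2]
  rw [e1, e2, e3, CVaR, intervalIntegral.integral_of_le hα.2.le, integral_Ioc_eq_integral_Ioo]
  field_simp
  ring

lemma measure_lt_VaR_le (hLm : Measurable L) {α : ℝ} (hα : α ∈ Ioo (0 : ℝ) 1) :
    F.real {ω | L ω < VaR F L α} ≤ α := by
  have h : F {ω | L ω < VaR F L α} = F.map L (Iio (VaR F L α)) :=
    (Measure.map_apply hLm measurableSet_Iio).symm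
  rw [Measure.real, h, ← map_VaR hLm,
    Measure.map_apply_of_aemeasurable (aemeasurable_VaR hLm) measurableSet_Iio,
    Measure.restrict_apply' measurableSet_Ioo]
  refine ENNReal.toReal_le_of_le_ofReal hα.1.le ?_
  calc _ ≤ volume (Ioo 0 α) := by
        refine measure_mono fun ξ hξ => ⟨hξ.2.1, ?_⟩
        by_contra! h
        exact absurd (VaR_monotoneOn hLm hα hξ.2 h) (not_le.2 hξ.1)
    _ = _ := by simp

end Quantile

section Dual

variable {Ω : Type*} [MeasurableSpace Ω] {F : Measure Ω} [IsProbabilityMeasure F] {L : Ω → ℝ}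

lemma dual_upper {α : ℝ} (hα : α ∈ Ioo (0 : ℝ) 1) (hL : Integrable L F) (q : ℝ)
    (G : Measure Ω) [IsProbabilityMeasure G] (hGF : G ≪ F)
    (hG : ∀ᵐ ω ∂F, G.rnDeriv F ω ≤ ENNReal.ofReal (1 / (1 - α))) :
    ∫ ω, L ω ∂G ≤ q + (1 - α)⁻¹ * ∫ ω, max (L ω - q) 0 ∂F := by
  have hc : (0 : ℝ) ≤ (1 - α)⁻¹ := inv_nonneg.2 (by linarith [hα.2])
  have hle : G ≤ ENNReal.ofReal (1 - α)⁻¹ • F := by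
    rw [← Measure.withDensity_rnDeriv_eq G F hGF, ← withDensity_const]
    refine withDensity_mono ?_
    rw [one_div] at hG
    exact hG
  have hLc : Integrable L (ENNReal.ofReal (1 - α)⁻¹ • F) := hL.smul_measure ENNReal.ofReal_ne_top
  have hLG : Integrable L G := hLc.mono_measure hle
  have hpF : Integrable (fun ω => max (L ω - q) 0) (ENNReal.ofReal (1 - α)⁻¹ • F) :=
    ((hL.sub (integrable_const q)).pos_part).smul_measure ENNReal.ofReal_ne_top
  have hpG : Integrable (fun ω => max (L ω - q) 0) G := hpF.mono_measure hle
  calc ∫ ω, L ω ∂G ≤ ∫ ω, (q + max (L ω - q) 0) ∂G := by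
        refine integral_mono hLG ((integrable_const q).add hpG) fun ω => ?_
        have := le_max_left (L ω - q) 0
        simp only
        linarith
    _ = q + ∫ ω, max (L ω - q) 0 ∂G := by
        rw [integral_add (integrable_const q) hpG]; simp
    _ ≤ q + ∫ ω, max (L ω - q) 0 ∂(ENNReal.ofReal (1 - α)⁻¹ • F) := by
        have h0 : 0 ≤ᵐ[ENNReal.ofReal (1 - α)⁻¹ • F] fun ω => max (L ω - q) 0 :=
          Eventually.of_forall fun ω => le_max_right (L ω - q) 0
        exact add_le_add_right (integral_mono_measure hle h0 hpF) q
    _ = _ := by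
        rw [integral_smul_measure, ENNReal.toReal_ofReal hc, smul_eq_mul]

lemma rnDeriv_le_of_le_smul {G : Measure Ω} {c : ENNReal} (h : G ≤ c • F) :
    ∀ᵐ ω ∂F, G.rnDeriv F ω ≤ c := by
  refine ae_le_of_forall_setLIntegral_le_of_sigmaFinite (Measure.measurable_rnDeriv G F)
    fun s _ _ => ?_
  rw [setLIntegral_const]
  exact (Measure.setLIntegral_rnDeriv_le s).trans (h s)

/-- The worst-case measure: full density on the upper tail and a partial one on the atom. -/
lemma dual_attained {α : ℝ} (hα : α ∈ Ioo (0 : ℝ) 1) (hLm : Measurable L)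
    (hL : Integrable L F) :
    ∃ G : Measure Ω, IsProbabilityMeasure G ∧ G ≪ F ∧
      (∀ᵐ ω ∂F, G.rnDeriv F ω ≤ ENNReal.ofReal (1 / (1 - α))) ∧
      VaR F L α + (1 - α)⁻¹ * ∫ ω, max (L ω - VaR F L α) 0 ∂F = ∫ ω, L ω ∂G := by
  have hlt := measure_lt_VaR_le (F := F) hLm hα
  have hge : α ≤ F.real {ω | L ω ≤ VaR F L α} := (VaR_le_iff hLm hα _).1 le_rfl
  set q := VaR F L α with hq
  set c : ℝ := (1 - α)⁻¹ with hcdef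
  have h1 : 0 < 1 - α := by linarith [hα.2]
  have hc : 0 ≤ c := inv_nonneg.2 h1.le
  set A := {ω | q < L ω} with hA
  set B := {ω | L ω = q} with hB
  have hAm : MeasurableSet A := measurableSet_lt measurable_const hLm
  have hBm : MeasurableSet B := hLm (measurableSet_singleton q)
  have hAB : Disjoint A B := disjoint_left.2 fun ω (ha : q < L ω) (hb : L ω = q) => ha.ne' hb
  have hAeq : F.real {ω | L ω ≤ q} = 1 - F.real A := by
    rw [← probReal_compl_eq_one_sub hAm]
    congr 1; ext ω; simp [hA]
  have hABeq : F.real {ω | L ω < q} = 1 - (F.real A + F.real B) := by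
    rw [← measureReal_union hAB hBm, ← probReal_compl_eq_one_sub (hAm.union hBm)]
    congr 1; ext ω
    simp only [hA, hB, mem_ofPred_eq, mem_compl_iff, mem_union, not_or, not_lt]
    exact lt_iff_le_and_ne
  have ha : c * F.real A ≤ 1 := by
    rw [hcdef, inv_mul_le_iff₀ h1]; linarith
  have hb : 1 ≤ c * (F.real A + F.real B) := by
    rw [hcdef, ← div_eq_inv_mul, le_div_iff₀ h1]; linarith
  -- If `B` is null, division by zero gives `κ = 0`, and `c * F.real A = 1`.
  set κ : ℝ := (1 - c * F.real A) / F.real B with hκ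
  have hB0 : 0 ≤ F.real B := measureReal_nonneg
  have hκ0 : 0 ≤ κ := div_nonneg (by linarith) hB0
  have hκc : κ ≤ c := div_le_of_le_mul₀ hB0 hc (by linarith)
  have hmass : c * F.real A + κ * F.real B = 1 := by
    rcases hB0.eq_or_lt with h | h
    · rw [← h] at hb ⊢; linarith
    · rw [hκ]; field_simp; ring
  set G : Measure Ω := ENNReal.ofReal c • F.restrict A + ENNReal.ofReal κ • F.restrict B with hG
  have hle : G ≤ ENNReal.ofReal c • F := by
    calc G ≤ ENNReal.ofReal c • F.restrict A + ENNReal.ofReal c • F.restrict B := by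
          rw [hG]; gcongr
      _ = ENNReal.ofReal c • F.restrict (A ∪ B) := by
          rw [Measure.restrict_union hAB hBm, smul_add]
      _ ≤ _ := by gcongr; exact Measure.restrict_le_self
  have hGp : IsProbabilityMeasure G := by
    refine ⟨?_⟩
    have hA' : F A = ENNReal.ofReal (F.real A) := (ofReal_measureReal).symm
    have hB' : F B = ENNReal.ofReal (F.real B) := (ofReal_measureReal).symm
    simp only [hG, Measure.add_apply, Measure.smul_apply, Measure.restrict_apply_univ, smul_eq_mul]
    rw [hA', hB', ← ENNReal.ofReal_mul hc, ← ENNReal.ofReal_mul hκ0, ← ENNReal.ofReal_add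
      (mul_nonneg hc measureReal_nonneg) (mul_nonneg hκ0 hB0), hmass, ENNReal.ofReal_one]
  refine ⟨G, hGp, ?_, ?_, ?_⟩
  · exact (Measure.absolutelyContinuous_of_le hle).trans Measure.smul_absolutelyContinuous
  · rw [one_div]; exact rnDeriv_le_of_le_smul hle
  have hLG : Integrable L G := (hL.smul_measure ENNReal.ofReal_ne_top).mono_measure hle
  have hLq : Integrable (fun ω => L ω - q) F := hL.sub (integrable_const q)
  have e1 : ∫ ω, L ω ∂G = q + ∫ ω, (L ω - q) ∂G := by
    rw [integral_sub hLG (integrable_const q)]; simp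
  have e2 : ∫ ω, (L ω - q) ∂G = c * ∫ ω in A, (L ω - q) ∂F := by
    rw [hG, integral_add_measure (hLq.restrict.smul_measure ENNReal.ofReal_ne_top)
      (hLq.restrict.smul_measure ENNReal.ofReal_ne_top), integral_smul_measure,
      integral_smul_measure, ENNReal.toReal_ofReal hc,
      setIntegral_eq_zero_of_forall_eq_zero (t := B) fun ω hω => sub_eq_zero.2 hω]
    simp
  have e3 : ∫ ω in A, (L ω - q) ∂F = ∫ ω, max (L ω - q) 0 ∂F := by
    rw [← integral_indicator hAm]
    congr 1; ext ω
    by_cases h : q < L ω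
    · rw [indicator_of_mem (show ω ∈ A from h), max_eq_left (by linarith)]
    · rw [indicator_of_notMem (show ω ∉ A from h), max_eq_right (by linarith)]
  rw [e1, e2, e3]

end Dual

/-- Dual representation of CVaR: the supremum of `E_G[L]` over probability measures
`G ≪ F` with density `dG/dF` bounded `F`-a.s. by `1/(1-α)`. -/
theorem cvar_eq_sSup_dual {Ω : Type*} [MeasurableSpace Ω] (F : Measure Ω)
    [IsProbabilityMeasure F] (α : ℝ) (hα : α ∈ Set.Ioo (0 : ℝ) 1)
    (L : Ω → ℝ) (hLm : Measurable L) (hL : Integrable L F) :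
    CVaR F L α =
      sSup {r : ℝ | ∃ G : Measure Ω, IsProbabilityMeasure G ∧ G ≪ F ∧
        (∀ᵐ ω ∂F, G.rnDeriv F ω ≤ ENNReal.ofReal (1 / (1 - α))) ∧
        r = ∫ ω, L ω ∂G} := by
  rw [CVaR_eq hLm hL hα]
  symm
  apply IsGreatest.csSup_eq
  refine ⟨dual_attained hα hLm hL, ?_⟩
  rintro r ⟨G, hGp, hGF, hG, rfl⟩
  exact dual_upper hα hL _ G hGF hG
end

section
/- Let α ∈ (0,1), let I be a nonempty finite index set, let ψ : I → ℝ be a probability vector (ψ_i ≥ 0, Σ_i ψ_i = 1), and let L : I → ℝ. Let X be a random variable taking value L_i with probability ψ_i. Then CVaR_α(X) = (1/(1-α)) · max { Σ_i L_i μ_i : μ : I → ℝ, 0 ≤ μ_i ≤ ψ_i for all i, Σ_i μ_i = 1-α }, and the maximum on the right-hand side is attained. -/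
/-!
Write `F` for the distribution function, `q ξ` for the Value-at-Risk and `t = q α`.

The quantile function satisfies `q ξ ≤ x ↔ ξ ≤ F x` on `(0, 1]` (`VaRcdf_le_iff`), so it pushes
Lebesgue measure on `(0, 1]` forward to the law `∑ ψ i δ_{L i}` (`map_VaRcdf`). As `q` is monotone,
`q - t` is nonnegative on `(α, 1]` and its positive part vanishes on `(0, α]`; hence
`∫_α^1 q = t (1 - α) + ∫_0^1 (q - t)⁺ = t (1 - α) + ∑ ψ i (L i - t)⁺` (`integral_VaRcdf`).

The right-hand side is the value of the dual linear program at `t`. It bounds every feasible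
`∑ L i μ i = t (1 - α) + ∑ (L i - t) μ i`, with equality when `μ i = ψ i` for `L i > t` and
`μ i = 0` for `L i < t`. A feasible `μ` of this kind exists, taking a constant fraction of `ψ i` on
`{L i = t}`, because `P(X < t) ≤ α ≤ P(X ≤ t)`.
-/

open Finset Set

/-- Value-at-Risk at level `ξ` for a loss with cumulative distribution function `cdf`. -/
noncomputable def VaRcdf (cdf : ℝ → ℝ) (ξ : ℝ) : ℝ :=
  sInf {x : ℝ | ξ ≤ cdf x}

/-- Conditional Value-at-Risk at level `α`: `(1/(1-α)) ∫_α^1 VaR_ξ dξ`. -/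
noncomputable def CVaRcdf (cdf : ℝ → ℝ) (α : ℝ) : ℝ :=
  (1 - α)⁻¹ * ∫ ξ in α..1, VaRcdf cdf ξ

/-- The cumulative distribution function of a discrete random variable taking
value `L i` with probability `ψ i`. -/
noncomputable def discreteCDF {I : Type*} [Fintype I] (ψ : I → ℝ) (L : I → ℝ) (x : ℝ) : ℝ :=
  ∑ i, if L i ≤ x then ψ i else 0

section

open MeasureTheory

variable {I : Type*} [Fintype I] {ψ L : I → ℝ}

lemma discreteCDF_mono (hψ0 : ∀ i, 0 ≤ ψ i) : Monotone (discreteCDF ψ L) := by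
  intro x y hxy
  refine Finset.sum_le_sum fun i _ => ?_
  have := hψ0 i
  split_ifs <;> linarith

lemma discreteCDF_le_one (hψ0 : ∀ i, 0 ≤ ψ i) (hψ1 : ∑ i, ψ i = 1) (x : ℝ) :
    discreteCDF ψ L x ≤ 1 := by
  rw [← hψ1]
  exact Finset.sum_le_sum fun i _ => by split_ifs <;> simp [hψ0 i]

/-- The distribution function is constant from each atom up to the next one: where it is positive,
its value is already reached at some atom to the left. -/
lemma exists_atom {x : ℝ} (hx : 0 < discreteCDF ψ L x) :
    ∃ i, L i ≤ x ∧ discreteCDF ψ L (L i) = discreteCDF ψ L x := by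
  have hne : (Finset.univ.filter fun i => L i ≤ x).Nonempty := by
    by_contra h
    rw [Finset.not_nonempty_iff_eq_empty, Finset.filter_eq_empty_iff] at h
    have : discreteCDF ψ L x = 0 := Finset.sum_eq_zero fun i hi => if_neg (h hi)
    linarith
  obtain ⟨i, hi, hmax⟩ := Finset.exists_max_image _ L hne
  simp only [Finset.mem_filter, Finset.mem_univ, true_and] at hi hmax
  refine ⟨i, hi, Finset.sum_congr rfl fun j _ => ?_⟩
  have : L j ≤ L i ↔ L j ≤ x := ⟨fun h => h.trans hi, hmax j⟩
  simp [this]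

/-- The infimum defining the Value-at-Risk is attained. -/
lemma isLeast_VaRcdf [Nonempty I] (hψ1 : ∑ i, ψ i = 1) {ξ : ℝ}
    (hξ0 : 0 < ξ) (hξ1 : ξ ≤ 1) :
    IsLeast {x : ℝ | ξ ≤ discreteCDF ψ L x} (VaRcdf (discreteCDF ψ L) ξ) := by
  have hne : (Finset.univ.filter fun i => ξ ≤ discreteCDF ψ L (L i)).Nonempty := by
    obtain ⟨i, -, hi⟩ := Finset.exists_max_image Finset.univ L Finset.univ_nonempty
    refine ⟨i, ?_⟩
    simp only [Finset.mem_filter, Finset.mem_univ, true_and]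
    have : discreteCDF ψ L (L i) = 1 := by
      rw [← hψ1]
      exact Finset.sum_congr rfl fun j hj => if_pos (hi j hj)
    linarith
  obtain ⟨i, hi, hmin⟩ := Finset.exists_min_image _ L hne
  simp only [Finset.mem_filter, Finset.mem_univ, true_and] at hi hmin
  have h : IsLeast {x : ℝ | ξ ≤ discreteCDF ψ L x} (L i) := by
    refine ⟨hi, fun x hx => ?_⟩
    have hx' : ξ ≤ discreteCDF ψ L x := hx
    obtain ⟨j, hj, hjx⟩ := exists_atom (hξ0.trans_le hx')
    exact (hmin j (hjx ▸ hx')).trans hj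
  have heq : VaRcdf (discreteCDF ψ L) ξ = L i := h.csInf_eq
  rwa [heq]

lemma VaRcdf_le_iff [Nonempty I] (hψ0 : ∀ i, 0 ≤ ψ i) (hψ1 : ∑ i, ψ i = 1) {ξ : ℝ}
    (hξ0 : 0 < ξ) (hξ1 : ξ ≤ 1) (x : ℝ) :
    VaRcdf (discreteCDF ψ L) ξ ≤ x ↔ ξ ≤ discreteCDF ψ L x := by
  have h := isLeast_VaRcdf (L := L) hψ1 hξ0 hξ1
  exact ⟨fun hx => le_trans h.1 (discreteCDF_mono hψ0 hx), fun hx => h.2 hx⟩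

lemma VaRcdf_monotoneOn [Nonempty I] (hψ0 : ∀ i, 0 ≤ ψ i) (hψ1 : ∑ i, ψ i = 1) :
    MonotoneOn (VaRcdf (discreteCDF ψ L)) (Set.Ioc 0 1) := by
  intro ξ hξ η hη h
  rw [VaRcdf_le_iff hψ0 hψ1 hξ.1 hξ.2]
  exact h.trans (isLeast_VaRcdf hψ1 hη.1 hη.2).1

/-- Quantile transform: the Value-at-Risk at a uniform random level has the original law. -/
lemma map_VaRcdf [Nonempty I] (hψ0 : ∀ i, 0 ≤ ψ i) (hψ1 : ∑ i, ψ i = 1) :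
    (volume.restrict (Set.Ioc (0 : ℝ) 1)).map (VaRcdf (discreteCDF ψ L)) =
      ∑ i, ENNReal.ofReal (ψ i) • Measure.dirac (L i) := by
  have hm : AEMeasurable (VaRcdf (discreteCDF ψ L)) (volume.restrict (Set.Ioc (0 : ℝ) 1)) :=
    aemeasurable_restrict_of_monotoneOn measurableSet_Ioc (VaRcdf_monotoneOn hψ0 hψ1)
  refine Measure.ext_of_Iic _ _ fun x => ?_
  rw [Measure.map_apply_of_aemeasurable hm measurableSet_Iic,
    Measure.restrict_apply' measurableSet_Ioc]
  have hset : VaRcdf (discreteCDF ψ L) ⁻¹' Set.Iic x ∩ Set.Ioc 0 1 =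
      Set.Ioc 0 (discreteCDF ψ L x) := by
    ext ξ
    simp only [Set.mem_inter_iff, Set.mem_preimage, Set.mem_Iic, Set.mem_Ioc]
    constructor
    · rintro ⟨h, h0, h1⟩
      exact ⟨h0, (VaRcdf_le_iff hψ0 hψ1 h0 h1 x).1 h⟩
    · rintro ⟨h0, h⟩
      have h1 := h.trans (discreteCDF_le_one hψ0 hψ1 x)
      exact ⟨(VaRcdf_le_iff hψ0 hψ1 h0 h1 x).2 h, h0, h1⟩
  rw [hset, Real.volume_Ioc, sub_zero, discreteCDF,
    ENNReal.ofReal_sum_of_nonneg (fun i _ => by split_ifs <;> simp [hψ0 i]),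
    Measure.finsetSum_apply]
  refine Finset.sum_congr rfl fun i _ => ?_
  by_cases h : L i ≤ x <;> simp [h]

/-- The expected excess over the threshold `VaR_α` expresses the tail integral. -/
lemma integral_VaRcdf [Nonempty I] {α : ℝ} (hα : α ∈ Set.Ioo (0 : ℝ) 1)
    (hψ0 : ∀ i, 0 ≤ ψ i) (hψ1 : ∑ i, ψ i = 1) :
    ∫ ξ in α..1, VaRcdf (discreteCDF ψ L) ξ =
      VaRcdf (discreteCDF ψ L) α * (1 - α) +
        ∑ i, max (L i - VaRcdf (discreteCDF ψ L) α) 0 * ψ i := by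
  set q := VaRcdf (discreteCDF ψ L) with hq
  have hmono : MonotoneOn q (Set.Ioc 0 1) := VaRcdf_monotoneOn hψ0 hψ1
  have hm : AEMeasurable q (volume.restrict (Set.Ioc (0 : ℝ) 1)) :=
    aemeasurable_restrict_of_monotoneOn measurableSet_Ioc hmono
  have hαm : α ∈ Set.Ioc (0 : ℝ) 1 := ⟨hα.1, hα.2.le⟩
  have hg : Continuous fun x : ℝ => max (x - q α) 0 := by fun_prop
  have hlaw : ∫ ξ in Set.Ioc (0 : ℝ) 1, max (q ξ - q α) 0 = ∑ i, max (L i - q α) 0 * ψ i := by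
    rw [← integral_map (φ := q) (f := fun x => max (x - q α) 0) hm hg.aestronglyMeasurable, hq,
      map_VaRcdf hψ0 hψ1, integral_finsetSum_measure]
    · refine Finset.sum_congr rfl fun i _ => ?_
      rw [integral_smul_measure, integral_dirac, ENNReal.toReal_ofReal (hψ0 i), smul_eq_mul,
        mul_comm]
    · intro i _
      exact (integrable_dirac (by simp)).smul_measure ENNReal.ofReal_ne_top
  -- The part of the excess below level `α` vanishes by monotonicity.
  have hcut : ∫ ξ in Set.Ioc (0 : ℝ) 1, max (q ξ - q α) 0 =
      ∫ ξ in Set.Ioc α 1, (q ξ - q α) := by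
    rw [setIntegral_eq_of_subset_of_forall_sdiff_eq_zero (s := Set.Ioc α 1) measurableSet_Ioc
      (Set.Ioc_subset_Ioc_left hα.1.le)]
    · refine setIntegral_congr_fun measurableSet_Ioc fun ξ hξ => ?_
      have := hmono hαm ⟨hα.1.trans hξ.1, hξ.2⟩ hξ.1.le
      exact max_eq_left (by linarith)
    · rintro ξ ⟨hξ, hξ'⟩
      have hle : ξ ≤ α := by
        by_contra h
        exact hξ' ⟨not_le.1 h, hξ.2⟩
      have := hmono hξ hαm hle
      exact max_eq_right (by linarith)
  have hint : IntervalIntegrable q volume α 1 := by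
    apply MonotoneOn.intervalIntegrable
    rw [Set.uIcc_of_le hα.2.le]
    exact hmono.mono fun ξ hξ => ⟨hα.1.trans_le hξ.1, hξ.2⟩
  have hsub : ∫ ξ in α..1, (q ξ - q α) = (∫ ξ in α..1, q ξ) - (1 - α) * q α := by
    rw [intervalIntegral.integral_sub hint intervalIntegrable_const,
      intervalIntegral.integral_const, smul_eq_mul]
  rw [intervalIntegral.integral_of_le hα.2.le, ← hcut, hlaw] at hsub
  linarith

/-- The atoms strictly below `VaR_α` carry mass at most `α`. -/
lemma sum_lt_VaRcdf_le [Nonempty I] {α : ℝ} (hα : α ∈ Set.Ioo (0 : ℝ) 1)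
    (hψ0 : ∀ i, 0 ≤ ψ i) (hψ1 : ∑ i, ψ i = 1) :
    (∑ i, if L i < VaRcdf (discreteCDF ψ L) α then ψ i else 0) ≤ α := by
  set t := VaRcdf (discreteCDF ψ L) α with ht
  rcases (Finset.univ.filter fun i => L i < t).eq_empty_or_nonempty with h | h
  · rw [Finset.filter_eq_empty_iff] at h
    rw [Finset.sum_eq_zero fun i hi => if_neg (h hi)]
    exact hα.1.le
  · -- The mass strictly below `t` is the value of `F` at the largest atom below `t`.
    obtain ⟨i, hi, hmax⟩ := Finset.exists_max_image _ L h
    simp only [Finset.mem_filter, Finset.mem_univ, true_and] at hi hmax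
    have heq : (∑ j, if L j < t then ψ j else 0) = discreteCDF ψ L (L i) := by
      refine Finset.sum_congr rfl fun j _ => ?_
      have : L j < t ↔ L j ≤ L i := ⟨hmax j, fun h => h.trans_lt hi⟩
      simp [this]
    rw [heq]
    by_contra hlt
    exact absurd ((VaRcdf_le_iff hψ0 hψ1 hα.1 hα.2.le (L i)).2 (not_le.1 hlt).le) (not_le.2 hi)

end

/-- For a discrete random variable taking value `L i` with probability `ψ i`,
`CVaR_α` equals `(1/(1-α))·max { Σ_i L_i μ_i : 0 ≤ μ_i ≤ ψ_i, Σ_i μ_i = 1-α }`,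
and the maximum is attained. -/
theorem discrete_cvar_eq_lp {I : Type*} [Fintype I] [Nonempty I]
    (α : ℝ) (hα : α ∈ Set.Ioo (0 : ℝ) 1)
    (ψ : I → ℝ) (hψ0 : ∀ i, 0 ≤ ψ i) (hψ1 : ∑ i, ψ i = 1) (L : I → ℝ) :
    IsGreatest
      {r : ℝ | ∃ μ : I → ℝ, (∀ i, 0 ≤ μ i ∧ μ i ≤ ψ i) ∧ (∑ i, μ i = 1 - α) ∧
        r = (1 - α)⁻¹ * ∑ i, L i * μ i}
      (CVaRcdf (discreteCDF ψ L) α) := by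
  have hI := integral_VaRcdf (L := L) hα hψ0 hψ1
  have hlt := sum_lt_VaRcdf_le (L := L) hα hψ0 hψ1
  have hge : α ≤ discreteCDF ψ L (VaRcdf (discreteCDF ψ L) α) :=
    (isLeast_VaRcdf hψ1 hα.1 hα.2.le).1
  unfold CVaRcdf
  rw [hI]
  set t := VaRcdf (discreteCDF ψ L) α with ht
  have hsplit : ∀ μ : I → ℝ, ∑ i, μ i = 1 - α →
      ∑ i, L i * μ i = t * (1 - α) + ∑ i, (L i - t) * μ i := by
    intro μ hμ
    rw [← hμ, Finset.mul_sum, ← Finset.sum_add_distrib]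
    exact Finset.sum_congr rfl fun i _ => by ring
  have hinv : 0 ≤ (1 - α)⁻¹ := inv_nonneg.2 (by linarith [hα.2])
  constructor
  · set p := ∑ i, if L i = t then ψ i else 0 with hp
    have hp0 : 0 ≤ p := Finset.sum_nonneg fun i _ => by split_ifs <;> simp [hψ0 i]
    have hF : discreteCDF ψ L t = (∑ i, if L i < t then ψ i else 0) + p := by
      rw [hp, discreteCDF, ← Finset.sum_add_distrib]
      refine Finset.sum_congr rfl fun i _ => ?_
      rcases lt_trichotomy (L i) t with h | h | h
      · simp [h, h.le, h.ne]
      · simp [h]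
      · simp [h.not_ge, h.not_gt, h.ne']
    -- The fraction of the mass at `t` belonging to the upper `1 - α` tail; if `p = 0` this is `0`.
    obtain ⟨c, hc0, hc1, hc⟩ : ∃ c : ℝ, 0 ≤ c ∧ c ≤ 1 ∧ c * p = discreteCDF ψ L t - α := by
      refine ⟨(discreteCDF ψ L t - α) / p, div_nonneg (by linarith) hp0,
        div_le_one_of_le₀ (by linarith) hp0, ?_⟩
      rcases eq_or_ne p 0 with h | h
      · rw [h, mul_zero]
        linarith
      · exact div_mul_cancel₀ _ h
    have hμ : ∑ i, ((if t < L i then ψ i else 0) + c * (if L i = t then ψ i else 0)) = 1 - α := by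
      have h1 : (∑ i, if t < L i then ψ i else 0) = 1 - discreteCDF ψ L t := by
        rw [← hψ1, discreteCDF, ← Finset.sum_sub_distrib]
        refine Finset.sum_congr rfl fun i _ => ?_
        rcases lt_or_ge t (L i) with h | h
        · simp [h, h.not_ge]
        · simp [h, h.not_gt]
      rw [Finset.sum_add_distrib, ← Finset.mul_sum, ← hp, hc, h1]
      ring
    refine ⟨fun i => (if t < L i then ψ i else 0) + c * (if L i = t then ψ i else 0), ?_, hμ, ?_⟩
    · intro i
      have := hψ0 i
      rcases lt_trichotomy (L i) t with h | h | h
      · simp [h.not_gt, h.ne, this]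
      · simp only [h, lt_irrefl, if_true, if_false]
        constructor <;> nlinarith
      · simp [h, h.ne', this]
    · rw [hsplit _ hμ]
      congr 2
      refine Finset.sum_congr rfl fun i _ => ?_
      rcases lt_trichotomy (L i) t with h | h | h
      · simp [h.not_gt, h.ne, h.le]
      · simp [h]
      · simp [h, h.ne', h.le]
  · rintro r ⟨μ, hb, hμ, rfl⟩
    refine mul_le_mul_of_nonneg_left ?_ hinv
    rw [hsplit μ hμ]
    gcongr with i
    · exact (hb i).1
    · exact le_max_left _ _
    · exact (hb i).2
end

section
/- Let α ∈ (0,1), let p ∈ ℝ^M and q ∈ ℝ^N be probability vectors, and let L ∈ ℝ^{M×N}. For every joint probability matrix ψ ∈ ℝ^{M×N} with nonnegative entries, row sums p and column sums q, the CVaR at level α of the discrete random loss taking value L_{mn} with probability ψ_{mn} is at most the optimal value of the linear program: maximize (1/(1-α)) Σ_{m,n} L_{mn} μ_{mn} over pairs (ψ', μ) subject to Σ_n ψ'_{mn} = p_m, Σ_m ψ'_{mn} = q_n, Σ_{m,n} μ_{mn} = 1-α, ψ'_{mn} ≥ 0, and 0 ≤ μ_{mn} ≤ ψ'_{mn}.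 -/
/-!
For a finite discrete loss the quantile function `ξ ↦ VaR_ξ` on `(0, 1]` takes only atom values:
it equals the atom value `x` exactly when `P(L < x) < ξ ≤ P(L ≤ x)` (`exists_atom_VaR` and
`atom_unique`). The set `quantileCell` of levels in `(α, 1]` with quantile `x` therefore has
length at most `P(L = x)`, and these cells partition `(α, 1]`.

Spreading the length of the cell of `x` over the atoms with value `x`, in proportion to their
masses, gives weights `0 ≤ μ ≤ ψ` of total mass `1 - α` with `∑ L μ = ∫_α^1 VaR_ξ dξ`
(`exists_tail_weights`). So `(ψ, μ)` is feasible for the linear program with objective value equal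
to the CVaR; as the set of objective values is bounded above, its supremum is at least the CVaR.
-/

open Finset Set

/-- The cumulative distribution function of a discrete random loss taking value `L m n`
with probability `ψ m n`. -/
noncomputable def jointCDF {M N : ℕ} (ψ L : Fin M → Fin N → ℝ) (x : ℝ) : ℝ :=
  ∑ m, ∑ n, if L m n ≤ x then ψ m n else 0

section AtomicLoss

variable {ι : Type*} [Fintype ι]

/-- `P(L ≤ x)` for the loss taking value `L i` with mass `ψ i`. -/
noncomputable def massLe (ψ L : ι → ℝ) (x : ℝ) : ℝ := ∑ i, if L i ≤ x then ψ i else 0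

/-- `P(L < x)` for the loss taking value `L i` with mass `ψ i`. -/
noncomputable def massLt (ψ L : ι → ℝ) (x : ℝ) : ℝ := ∑ i, if L i < x then ψ i else 0

/-- `P(L = x)` for the loss taking value `L i` with mass `ψ i`. -/
noncomputable def massEq (ψ L : ι → ℝ) (x : ℝ) : ℝ := ∑ i, if L i = x then ψ i else 0

/-- The levels `ξ ∈ (α, 1]` with `P(L < x) < ξ ≤ P(L ≤ x)`, that is, whose quantile is `x`
(when the masses are nonnegative with sum `1` and `0 < α`). -/
def quantileCell (ψ L : ι → ℝ) (α x : ℝ) : Set ℝ :=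
  Set.Ioc α 1 ∩ Set.Ioc (massLt ψ L x) (massLe ψ L x)

lemma massLe_eq_add (ψ L : ι → ℝ) (x : ℝ) :
    massLe ψ L x = massLt ψ L x + massEq ψ L x := by
  unfold massLe massLt massEq
  rw [← Finset.sum_add_distrib]
  refine Finset.sum_congr rfl fun i _ => ?_
  rcases lt_trichotomy (L i) x with h | h | h
  · simp [h, h.le, h.ne]
  · simp [h]
  · simp [h.not_ge, h.not_gt, h.ne']

lemma massLe_le_massLt {ψ L : ι → ℝ} (h0 : ∀ i, 0 ≤ ψ i) {x y : ℝ} (hxy : x < y) :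
    massLe ψ L x ≤ massLt ψ L y := by
  refine Finset.sum_le_sum fun i _ => ?_
  by_cases h : L i ≤ x
  · simp [h, h.trans_lt hxy]
  · simp only [h, if_false]
    split_ifs <;> simp [h0 i]

lemma atom_unique {ψ L : ι → ℝ} (h0 : ∀ i, 0 ≤ ψ i) {x y ξ : ℝ}
    (hx : ξ ∈ Set.Ioc (massLt ψ L x) (massLe ψ L x))
    (hy : ξ ∈ Set.Ioc (massLt ψ L y) (massLe ψ L y)) : x = y := by
  rcases lt_trichotomy x y with h | h | h
  · have := massLe_le_massLt (L := L) h0 h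
    linarith [hx.2, hy.1]
  · exact h
  · have := massLe_le_massLt (L := L) h0 h
    linarith [hy.2, hx.1]

/-- If the event `P(L)` has positive mass, it contains an atom, and the largest atom value `L j`
in it satisfies `{P(L)} ⊆ {L ≤ L j}`. -/
lemma exists_atom_of_pos {ψ L : ι → ℝ} (h0 : ∀ i, 0 ≤ ψ i) (P : ℝ → Prop) [DecidablePred P]
    (hpos : 0 < ∑ i, if P (L i) then ψ i else 0) :
    ∃ j, P (L j) ∧ (∑ i, if P (L i) then ψ i else 0) ≤ massLe ψ L (L j) := by
  have hne : (Finset.univ.filter fun i => P (L i)).Nonempty := by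
    by_contra hcon
    rw [Finset.not_nonempty_iff_eq_empty, Finset.filter_eq_empty_iff] at hcon
    rw [Finset.sum_eq_zero fun i hi => if_neg (hcon hi)] at hpos
    exact lt_irrefl _ hpos
  obtain ⟨j, hj, hmax⟩ := Finset.exists_max_image _ L hne
  refine ⟨j, (Finset.mem_filter.1 hj).2, Finset.sum_le_sum fun i _ => ?_⟩
  by_cases h : P (L i)
  · simp [h, hmax i (by simp [h])]
  · simp only [h, if_false]
    split_ifs <;> simp [h0 i]

/-- The quantile at a level in `(0, 1]` is an atom value, and the level lies in its cell. -/
lemma exists_atom_VaR {ψ L : ι → ℝ} (h0 : ∀ i, 0 ≤ ψ i) (h1 : ∑ i, ψ i = 1) {ξ : ℝ}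
    (hξ : 0 < ξ) (hξ1 : ξ ≤ 1) :
    ∃ i, VaRcdf (massLe ψ L) ξ = L i ∧
      ξ ∈ Set.Ioc (massLt ψ L (L i)) (massLe ψ L (L i)) := by
  have hne : (Finset.univ.filter fun i => ξ ≤ massLe ψ L (L i)).Nonempty := by
    obtain ⟨j, -, hj⟩ := exists_atom_of_pos (L := L) h0 (fun _ => True) (by simp [h1])
    exact ⟨j, by simp only [if_true, h1] at hj; simp [hξ1.trans hj]⟩
  obtain ⟨i, hi, hmin⟩ := Finset.exists_min_image _ L hne
  have hi' : ξ ≤ massLe ψ L (L i) := (Finset.mem_filter.1 hi).2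
  refine ⟨i, ?_, ?_, hi'⟩
  · refine IsLeast.csInf_eq ⟨hi', fun x hx => ?_⟩
    have hx' : ξ ≤ massLe ψ L x := hx
    obtain ⟨j, hj, hj'⟩ := exists_atom_of_pos (L := L) h0 (fun y => y ≤ x) (hξ.trans_le hx')
    exact (hmin j (by simp [hx'.trans hj'])).trans hj
  · by_contra hcon
    have hx' : ξ ≤ massLt ψ L (L i) := not_lt.1 hcon
    obtain ⟨j, hj, hj'⟩ := exists_atom_of_pos (L := L) h0 (fun y => y < L i) (hξ.trans_le hx')
    exact absurd (hmin j (by simp [hx'.trans hj'])) (not_le.2 hj)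

lemma volume_quantileCell_le {ψ L : ι → ℝ} (h0 : ∀ i, 0 ≤ ψ i) (α x : ℝ) :
    MeasureTheory.volume.real (quantileCell ψ L α x) ≤ massEq ψ L x := by
  have hw : 0 ≤ massEq ψ L x := Finset.sum_nonneg fun i _ => by
    split_ifs <;> simp [h0 i]
  have h : MeasureTheory.volume.real (quantileCell ψ L α x) ≤ _ :=
    MeasureTheory.measureReal_mono (μ := MeasureTheory.volume)
    (Set.inter_subset_right : quantileCell ψ L α x ⊆ Set.Ioc (massLt ψ L x) (massLe ψ L x))
    (by simp)
  have e := massLe_eq_add ψ L x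
  rw [Real.volume_real_Ioc_of_le (by linarith)] at h
  linarith

/-- Change of variables for the quantile function. The identity and the constant `1` are the two
choices of `g` needed. -/
lemma integral_VaR {ψ L : ι → ℝ} (h0 : ∀ i, 0 ≤ ψ i) (h1 : ∑ i, ψ i = 1) {α : ℝ}
    (hα : α ∈ Set.Ioo (0 : ℝ) 1) (g : ℝ → ℝ) :
    ∫ ξ in α..1, g (VaRcdf (massLe ψ L) ξ) =
      ∑ x ∈ Finset.univ.image L, g x * MeasureTheory.volume.real (quantileCell ψ L α x) := by
  classical
  have hmeas : ∀ x, MeasurableSet (quantileCell ψ L α x) := fun x =>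
    measurableSet_Ioc.inter measurableSet_Ioc
  rw [intervalIntegral.integral_of_le hα.2.le]
  have hpt : ∀ ξ ∈ Set.Ioc α 1, g (VaRcdf (massLe ψ L) ξ) =
      ∑ x ∈ Finset.univ.image L, (quantileCell ψ L α x).indicator (fun _ => g x) ξ := by
    intro ξ hξ
    obtain ⟨i, hi, hcell⟩ := exists_atom_VaR (L := L) h0 h1 (hα.1.trans hξ.1) hξ.2
    rw [Finset.sum_eq_single (L i), Set.indicator_of_mem (show ξ ∈ quantileCell ψ L α (L i) from
      ⟨hξ, hcell⟩), hi]
    · intro y _ hy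
      exact Set.indicator_of_notMem (fun hmem => hy (atom_unique h0 hmem.2 hcell)) _
    · intro h
      simp at h
  rw [MeasureTheory.setIntegral_congr_fun measurableSet_Ioc hpt, MeasureTheory.integral_finsetSum]
  · refine Finset.sum_congr rfl fun x _ => ?_
    rw [MeasureTheory.setIntegral_indicator (hmeas x), MeasureTheory.setIntegral_const,
      Set.inter_eq_right.2 (show quantileCell ψ L α x ⊆ Set.Ioc α 1 from Set.inter_subset_left),
      smul_eq_mul, mul_comm]
  · intro x _
    exact (MeasureTheory.integrable_const _).indicator (hmeas x)

/-- The upper `1 - α` tail of the loss, as a sub-mass of `ψ`, represents the tail integral of the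
quantile function. -/
lemma exists_tail_weights {ψ L : ι → ℝ} (h0 : ∀ i, 0 ≤ ψ i) (h1 : ∑ i, ψ i = 1) {α : ℝ}
    (hα : α ∈ Set.Ioo (0 : ℝ) 1) :
    ∃ μ : ι → ℝ, (∀ i, 0 ≤ μ i ∧ μ i ≤ ψ i) ∧ ∑ i, μ i = 1 - α ∧
      ∑ i, L i * μ i = ∫ ξ in α..1, VaRcdf (massLe ψ L) ξ := by
  classical
  set c : ℝ → ℝ := fun x => MeasureTheory.volume.real (quantileCell ψ L α x) with hc
  have hc0 : ∀ x, 0 ≤ c x := fun x => MeasureTheory.measureReal_nonneg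
  have hcw : ∀ x, c x ≤ massEq ψ L x := volume_quantileCell_le h0 α
  have hw0 : ∀ x, 0 ≤ massEq ψ L x := fun x => (hc0 x).trans (hcw x)
  -- Where `massEq` vanishes the division is junk, but then `c` vanishes as well.
  have hcancel : ∀ x, massEq ψ L x * (c x / massEq ψ L x) = c x := by
    intro x
    by_cases h : massEq ψ L x = 0
    · have : c x = 0 := le_antisymm (h ▸ hcw x) (hc0 x)
      simp [this]
    · field_simp
  have key : ∀ g : ℝ → ℝ, ∑ i, g (L i) * (ψ i * (c (L i) / massEq ψ L (L i))) =
      ∫ ξ in α..1, g (VaRcdf (massLe ψ L) ξ) := by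
    intro g
    rw [integral_VaR h0 h1 hα g, ← Finset.sum_fiberwise_of_maps_to
      (s := Finset.univ) (t := Finset.univ.image L) (g := L) (by simp)]
    refine Finset.sum_congr rfl fun x _ => ?_
    calc ∑ i with L i = x, g (L i) * (ψ i * (c (L i) / massEq ψ L (L i)))
        = ∑ i with L i = x, ψ i * (g x * (c x / massEq ψ L x)) := by
          refine Finset.sum_congr rfl fun i hi => ?_
          rw [(Finset.mem_filter.1 hi).2]
          ring
      _ = massEq ψ L x * (g x * (c x / massEq ψ L x)) := by
          rw [← Finset.sum_mul, Finset.sum_filter, massEq]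
      _ = g x * c x := by
          rw [mul_left_comm, hcancel]
  refine ⟨fun i => ψ i * (c (L i) / massEq ψ L (L i)), fun i => ⟨?_, ?_⟩, ?_, key id⟩
  · exact mul_nonneg (h0 i) (div_nonneg (hc0 _) (hw0 _))
  · exact mul_le_of_le_one_right (h0 i) (div_le_one_of_le₀ (hcw _) (hw0 _))
  · simpa using key fun _ => 1

end AtomicLoss

/-- For every joint probability matrix `ψ` with marginals `p` and `q`, the CVaR of the
corresponding discrete loss is at most the optimal value of the linear program (3). -/
theorem cvar_le_lp_value {M N : ℕ} (hM : 0 < M) (hN : 0 < N)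
    (α : ℝ) (hα : α ∈ Set.Ioo (0 : ℝ) 1)
    (p : Fin M → ℝ) (hp0 : ∀ m, 0 ≤ p m) (hp1 : ∑ m, p m = 1)
    (q : Fin N → ℝ) (hq0 : ∀ n, 0 ≤ q n) (hq1 : ∑ n, q n = 1)
    (L : Fin M → Fin N → ℝ)
    (ψ : Fin M → Fin N → ℝ) (hψ0 : ∀ m n, 0 ≤ ψ m n)
    (hψrow : ∀ m, ∑ n, ψ m n = p m) (hψcol : ∀ n, ∑ m, ψ m n = q n) :
    CVaRcdf (jointCDF ψ L) α ≤
      sSup {v : ℝ | ∃ ψ' μ : Fin M → Fin N → ℝ,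
        (∀ m, ∑ n, ψ' m n = p m) ∧ (∀ n, ∑ m, ψ' m n = q n) ∧
        (∑ m, ∑ n, μ m n = 1 - α) ∧ (∀ m n, 0 ≤ ψ' m n) ∧
        (∀ m n, 0 ≤ μ m n ∧ μ m n ≤ ψ' m n) ∧
        v = (1 - α)⁻¹ * ∑ m, ∑ n, L m n * μ m n} := by
  have hα1 : 0 < 1 - α := by linarith [hα.2]
  have hsum : ∑ i : Fin M × Fin N, ψ i.1 i.2 = 1 := by
    rw [Fintype.sum_prod_type]
    simp only [hψrow, hp1]
  have hcdf : jointCDF ψ L =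
      massLe (fun i : Fin M × Fin N => ψ i.1 i.2) (fun i => L i.1 i.2) := by
    funext x
    simp only [jointCDF, massLe, Fintype.sum_prod_type]
  obtain ⟨μ, hμ, hμ1, hμL⟩ := exists_tail_weights
    (ψ := fun i : Fin M × Fin N => ψ i.1 i.2) (L := fun i => L i.1 i.2)
    (fun i => hψ0 i.1 i.2) hsum hα
  refine le_csSup ⟨(1 - α)⁻¹ * ∑ m, ∑ n : Fin N, |L m n| * p m, ?_⟩ ?_
  · rintro v ⟨ψ', μ', hrow, -, -, hψ', hμ', rfl⟩
    refine mul_le_mul_of_nonneg_left ?_ (inv_nonneg.2 hα1.le)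
    refine Finset.sum_le_sum fun m _ => Finset.sum_le_sum fun n _ => ?_
    have hle : μ' m n ≤ p m := (hμ' m n).2.trans
      ((Finset.single_le_sum (fun k _ => hψ' m k) (Finset.mem_univ n)).trans_eq (hrow m))
    exact mul_le_mul (le_abs_self _) hle (hμ' m n).1 (abs_nonneg _)
  · refine ⟨ψ, fun m n => μ (m, n), hψrow, hψcol, ?_, hψ0, fun m n => hμ (m, n), ?_⟩
    · rw [← hμ1, Fintype.sum_prod_type]
    · rw [CVaRcdf, hcdf, ← hμL, Fintype.sum_prod_type]
end
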